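/- Let u ∈ 𝓗₀¹(Ω) and set u⁺ = max(u,0), u⁻ = −min(u,0). Then: (1) the weak derivatives satisfy ∂ₓ(u⁺) = ∂ₓu a.e. on {u > 0} and ∂ₓ(u⁺) = 0 a.e. on {u ≤ 0}, ∂ₓ(u⁻) = −∂ₓu a.e. on {u < 0} and ∂ₓ(u⁻) = 0 a.e. on {u ≥ 0}, and the analogous formulas hold for ∂_y; (2) the weak gradient of u vanishes a.e. on the set {u = 0}; (3) u⁺, u⁻ and |u| all belong to 𝓗₀¹(Ω). -/

import Mathlib

open MeasureTheory Set Filter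

noncomputable section

/-- The open unit square `Ω = (0,1) × (0,1)` in `ℝ²`. -/
def Omega : Set (ℝ × ℝ) := Ioo (0:ℝ) 1 ×ˢ Ioo (0:ℝ) 1

/-- Test functions on a set `s`: smooth with compact support contained in `s`. -/
def IsTestOn (s : Set (ℝ × ℝ)) (φ : ℝ × ℝ → ℝ) : Prop :=
  ContDiff ℝ (⊤ : ℕ∞) φ ∧ HasCompactSupport φ ∧ tsupport φ ⊆ s

/-- Classical partial derivative in the `x`-direction. -/
def pdx (φ : ℝ × ℝ → ℝ) (p : ℝ × ℝ) : ℝ := fderiv ℝ φ p (1, 0)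

/-- Classical partial derivative in the `y`-direction. -/
def pdy (φ : ℝ × ℝ → ℝ) (p : ℝ × ℝ) : ℝ := fderiv ℝ φ p (0, 1)

/-- `g` is a weak `x`-partial derivative of `u` on `s`. -/
def HasWeakDerivXOn (s : Set (ℝ × ℝ)) (u g : ℝ × ℝ → ℝ) : Prop :=
  LocallyIntegrableOn u s volume ∧ LocallyIntegrableOn g s volume ∧
  ∀ φ : ℝ × ℝ → ℝ, IsTestOn s φ →
    ∫ p in s, u p * pdx φ p = - ∫ p in s, g p * φ p

/-- `g` is a weak `y`-partial derivative of `u` on `s`. -/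
def HasWeakDerivYOn (s : Set (ℝ × ℝ)) (u g : ℝ × ℝ → ℝ) : Prop :=
  LocallyIntegrableOn u s volume ∧ LocallyIntegrableOn g s volume ∧
  ∀ φ : ℝ × ℝ → ℝ, IsTestOn s φ →
    ∫ p in s, u p * pdy φ p = - ∫ p in s, g p * φ p

/-- Test functions on `Ω`. -/
def IsTest (φ : ℝ × ℝ → ℝ) : Prop := IsTestOn Omega φ

/-- Membership in the weighted Sobolev space `𝓗¹(Ω)`, with weak derivatives `gx, gy`:
`u ∈ L²(Ω)`, `gx = ∂ₓu`, `gy = ∂_y u` weakly, and `y^α₁ gx, x^α₂ gy ∈ L²(Ω)`. -/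
structure MemH1 (α₁ α₂ : ℝ) (u gx gy : ℝ × ℝ → ℝ) : Prop where
  memL2 : MemLp u 2 (volume.restrict Omega)
  weakX : HasWeakDerivXOn Omega u gx
  weakY : HasWeakDerivYOn Omega u gy
  wgx : MemLp (fun p => p.2 ^ α₁ * gx p) 2 (volume.restrict Omega)
  wgy : MemLp (fun p => p.1 ^ α₂ * gy p) 2 (volume.restrict Omega)

/-- The `𝓗¹(Ω)` norm of `u` (with weak derivatives `gx, gy`). -/
def H1Norm (α₁ α₂ : ℝ) (u gx gy : ℝ × ℝ → ℝ) : ℝ :=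
  Real.sqrt ((∫ p in Omega, (u p) ^ 2) +
    (∫ p in Omega, (p.2 ^ α₁ * gx p) ^ 2) +
    (∫ p in Omega, (p.1 ^ α₂ * gy p) ^ 2))

/-- Membership in `𝓗₀¹(Ω)`: member of `𝓗¹(Ω)` approximable in the `𝓗¹` norm by
test functions. -/
def MemH10 (α₁ α₂ : ℝ) (u gx gy : ℝ × ℝ → ℝ) : Prop :=
  MemH1 α₁ α₂ u gx gy ∧
  ∀ ε : ℝ, 0 < ε → ∃ φ : ℝ × ℝ → ℝ, IsTest φ ∧
    H1Norm α₁ α₂ (fun p => u p - φ p) (fun p => gx p - pdx φ p)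
      (fun p => gy p - pdy φ p) < ε

/-- Membership in `H₀(Ω) = {u ∈ 𝓗₀¹(Ω) : ∫_Ω V u² < ∞}`. -/
def MemH0 (α₁ α₂ : ℝ) (V u gx gy : ℝ × ℝ → ℝ) : Prop :=
  MemH10 α₁ α₂ u gx gy ∧
  IntegrableOn (fun p => V p * (u p) ^ 2) Omega volume

/-- The bilinear form `a(u,v)` associated with the sub-elliptic operator with potential `V`. -/
def aForm (α₁ α₂ : ℝ) (V u gx gy v hx hy : ℝ × ℝ → ℝ) : ℝ :=
  ∫ p in Omega, ((p.2 ^ α₁ * gx p) * (p.2 ^ α₁ * hx p) +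
    (p.1 ^ α₂ * gy p) * (p.1 ^ α₂ * hy p) + V p * u p * v p)

/-- The bilinear form `a₁(u,v)` (no potential). -/
def a1Form (α₁ α₂ : ℝ) (u gx gy v hx hy : ℝ × ℝ → ℝ) : ℝ :=
  ∫ p in Omega, ((p.2 ^ α₁ * gx p) * (p.2 ^ α₁ * hx p) +
    (p.1 ^ α₂ * gy p) * (p.1 ^ α₂ * hy p))

/-- Membership in `S_p = {V ∈ L^p(Ω) : V ≥ 0 a.e., ‖V‖_{L^p(Ω)} ≤ M}`. -/
def MemSp (ppow M : ℝ) (V : ℝ × ℝ → ℝ) : Prop :=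
  MemLp V (ENNReal.ofReal ppow) (volume.restrict Omega) ∧
  (∀ᵐ p ∂(volume.restrict Omega), 0 ≤ V p) ∧
  eLpNorm V (ENNReal.ofReal ppow) (volume.restrict Omega) ≤ ENNReal.ofReal M

/-- `u` (with weak derivatives `gx, gy`) is an eigenfunction of the sub-elliptic operator
with potential `V` for the eigenvalue `lam`. -/
def IsEigenfun (α₁ α₂ : ℝ) (V : ℝ × ℝ → ℝ) (lam : ℝ) (u gx gy : ℝ × ℝ → ℝ) : Prop :=
  MemH0 α₁ α₂ V u gx gy ∧
  ∀ v hx hy : ℝ × ℝ → ℝ, MemH0 α₁ α₂ V v hx hy →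
    aForm α₁ α₂ V u gx gy v hx hy = lam * ∫ p in Omega, u p * v p

/-- The first eigenvalue `λ₁(V) = inf { a(u,u) : u ∈ H₀(Ω), ‖u‖_{L²} = 1 }`. -/
def lam1 (α₁ α₂ : ℝ) (V : ℝ × ℝ → ℝ) : ℝ :=
  sInf { r | ∃ u gx gy : ℝ × ℝ → ℝ, MemH0 α₁ α₂ V u gx gy ∧
    (∫ p in Omega, (u p) ^ 2) = 1 ∧ r = aForm α₁ α₂ V u gx gy u gx gy }

/-- `sup { a(u,u) : u ∈ span(φ), ‖u‖_{L²(Ω)} = 1 }` for a finite family `φ` with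
weak derivatives `φx, φy`. -/
def rayleighSup (α₁ α₂ : ℝ) (V : ℝ × ℝ → ℝ) {k : ℕ} (φ φx φy : Fin k → ℝ × ℝ → ℝ) : ℝ :=
  sSup { s | ∃ c : Fin k → ℝ,
    (∫ p in Omega, (∑ i, c i * φ i p) ^ 2) = 1 ∧
    s = aForm α₁ α₂ V (fun p => ∑ i, c i * φ i p) (fun p => ∑ i, c i * φx i p)
      (fun p => ∑ i, c i * φy i p) (fun p => ∑ i, c i * φ i p)
      (fun p => ∑ i, c i * φx i p) (fun p => ∑ i, c i * φy i p) }

/-- The set of values `sup { a(u,u) : u ∈ E, ‖u‖ = 1 }` over `k`-dimensional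
subspaces `E` of `H₀(Ω)` (represented by `L²(Ω)`-linearly independent families of
`k` elements of `H₀(Ω)`). -/
def minmaxSet (α₁ α₂ : ℝ) (V : ℝ × ℝ → ℝ) (k : ℕ) : Set ℝ :=
  { r | ∃ φ φx φy : Fin k → ℝ × ℝ → ℝ,
      (∀ i, MemH0 α₁ α₂ V (φ i) (φx i) (φy i)) ∧
      (∀ c : Fin k → ℝ, (∀ᵐ p ∂(volume.restrict Omega), ∑ i, c i * φ i p = 0) → c = 0) ∧
      r = rayleighSup α₁ α₂ V φ φx φy }

/-- The `k`-th eigenvalue via the min-max principle. -/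
def lamk (α₁ α₂ : ℝ) (V : ℝ × ℝ → ℝ) (k : ℕ) : ℝ := sInf (minmaxSet α₁ α₂ V k)

/-- Membership in `U = (𝓗₀¹(Ω) ∩ L^{2q}(Ω)) \ {0}`. -/
def MemU (α₁ α₂ qe : ℝ) (u gx gy : ℝ × ℝ → ℝ) : Prop :=
  MemH10 α₁ α₂ u gx gy ∧
  MemLp u (ENNReal.ofReal (2 * qe)) (volume.restrict Omega) ∧
  ¬ (∀ᵐ p ∂(volume.restrict Omega), u p = 0)

/-- The functional `J(u) = (a₁(u,u) + M ‖u‖_{L^{2q}(Ω)}²) / ‖u‖_{L²(Ω)}²`. -/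
def Jfun (α₁ α₂ M qe : ℝ) (u gx gy : ℝ × ℝ → ℝ) : ℝ :=
  (a1Form α₁ α₂ u gx gy u gx gy +
    M * (∫ p in Omega, |u p| ^ (2 * qe)) ^ (1 / qe)) / (∫ p in Omega, (u p) ^ 2)

theorem aux_sq_add {μ : Measure (ℝ × ℝ)} {f g : ℝ × ℝ → ℝ} (hf : MemLp f 2 μ) (hg : MemLp g 2 μ) :
    ∫ p, (f p + g p) ^ 2 ∂μ ≤ 2 * ∫ p, (f p) ^ 2 ∂μ + 2 * ∫ p, (g p) ^ 2 ∂μ := by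
  rw [← integral_const_mul, ← integral_const_mul, ← integral_add]
  · apply integral_mono
    · exact (hf.add hg).integrable_sq
    · exact (hf.integrable_sq.const_mul 2).add (hg.integrable_sq.const_mul 2)
    · intro p
      simp only
      nlinarith [sq_nonneg (f p - g p)]
  · exact hf.integrable_sq.const_mul 2
  · exact hg.integrable_sq.const_mul 2

theorem aux_bdd_mul {μ : Measure (ℝ × ℝ)} {m f : ℝ × ℝ → ℝ} (C : ℝ)
    (hm : AEStronglyMeasurable m μ) (hC : ∀ p, |m p| ≤ C) (hf : MemLp f 2 μ) :
    MemLp (fun p => m p * f p) 2 μ := by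
  apply MemLp.of_le_mul (c := C) hf (hm.mul hf.1)
  filter_upwards with p
  rw [Pi.mul_apply, norm_mul]
  exact mul_le_mul_of_nonneg_right (hC p) (norm_nonneg _)

theorem aux_dct {μ : Measure (ℝ × ℝ)} {m : ℕ → ℝ × ℝ → ℝ} {f : ℝ × ℝ → ℝ} (C : ℝ)
    (hm : ∀ n, AEStronglyMeasurable (m n) μ) (hC : ∀ n p, |m n p| ≤ C) (hf : MemLp f 2 μ)
    (hlim : ∀ᵐ p ∂μ, Tendsto (fun n => m n p) atTop (nhds 0)) :
    Tendsto (fun n => ∫ p, (m n p * f p) ^ 2 ∂μ) atTop (nhds 0) := by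
  have : Tendsto (fun n => ∫ p, (m n p * f p) ^ 2 ∂μ) atTop (nhds (∫ p, (0:ℝ) ∂μ)) := by
    apply tendsto_integral_of_dominated_convergence (fun p => C ^ 2 * (f p) ^ 2)
    · intro n
      exact ((hm n).mul hf.1).pow 2
    · exact hf.integrable_sq.const_mul _
    · intro n
      filter_upwards with p
      rw [norm_pow, norm_mul, mul_pow, Real.norm_eq_abs, Real.norm_eq_abs, sq_abs (f p)]
      gcongr
      exact hC n p
    · filter_upwards [hlim] with p hp
      have := (hp.mul_const (f p)).pow 2
      simpa using this
  simpa using this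

theorem aux_subseq {μ : Measure (ℝ × ℝ)} {f : ℕ → ℝ × ℝ → ℝ}
    (hm : ∀ n, MemLp (f n) 2 μ)
    (h : Tendsto (fun n => ∫ p, (f n p) ^ 2 ∂μ) atTop (nhds 0)) :
    ∃ ns : ℕ → ℕ, StrictMono ns ∧ ∀ᵐ p ∂μ, Tendsto (fun i => f (ns i) p) atTop (nhds 0) := by
  have h1 : TendstoInMeasure μ (fun n p => (f n p) ^ 2) atTop (fun _ => (0:ℝ)) := by
    apply tendstoInMeasure_of_tendsto_eLpNorm (p := 1) one_ne_zero
    · intro n; exact ((hm n).1.pow 2)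
    · exact aestronglyMeasurable_const
    · have h2 : ∀ n, eLpNorm ((fun p => (f n p) ^ 2) - fun _ => (0:ℝ)) 1 μ
          = ENNReal.ofReal (∫ p, (f n p) ^ 2 ∂μ) := by
        intro n
        rw [eLpNorm_one_eq_lintegral_enorm]
        have := ofReal_integral_norm_eq_lintegral_enorm (hm n).integrable_sq
        simp only [Pi.sub_apply, sub_zero]
        rw [← this]
        simp
      simp_rw [h2]
      simpa using ENNReal.tendsto_ofReal h
  obtain ⟨ns, hns, hae⟩ := h1.exists_seq_tendsto_ae
  refine ⟨ns, hns, ?_⟩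
  filter_upwards [hae] with p hp
  have := (Real.continuous_sqrt.tendsto 0).comp hp
  rw [Real.sqrt_zero] at this
  apply (tendsto_zero_iff_abs_tendsto_zero _).2
  refine this.congr ?_
  intro i
  simp [Real.sqrt_sq_eq_abs]

theorem aux_isOpen : IsOpen Omega := isOpen_Ioo.prod isOpen_Ioo

instance aux_fin : IsFiniteMeasure ((volume : Measure (ℝ × ℝ)).restrict Omega) := by
  constructor
  rw [Measure.restrict_apply_univ, Omega, Measure.volume_eq_prod, Measure.prod_prod]
  simp

theorem aux_fd_cont {φ : ℝ × ℝ → ℝ} (hφ : IsTest φ) (e : ℝ × ℝ) :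
    Continuous (fun p => fderiv ℝ φ p e) :=
  (hφ.1.continuous_fderiv (by simp)).clm_apply continuous_const

theorem aux_fd_supp {φ : ℝ × ℝ → ℝ} (hφ : IsTest φ) (e : ℝ × ℝ) :
    HasCompactSupport (fun p => fderiv ℝ φ p e) :=
  hφ.2.1.fderiv_apply (𝕜 := ℝ) e

theorem aux_test_memLp {φ : ℝ × ℝ → ℝ} (hφ : IsTest φ) :
    MemLp φ 2 (volume.restrict Omega) :=
  (hφ.1.continuous.memLp_of_hasCompactSupport hφ.2.1).restrict _

theorem aux_test_memLp' {φ w : ℝ × ℝ → ℝ} (hφ : IsTest φ) (hw : Continuous w) (e : ℝ × ℝ) :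
    MemLp (fun p => w p * fderiv ℝ φ p e) 2 (volume.restrict Omega) :=
  ((hw.mul (aux_fd_cont hφ e)).memLp_of_hasCompactSupport (aux_fd_supp hφ e).mul_left).restrict _

theorem aux_zero_off {φ : ℝ × ℝ → ℝ} (hφ : IsTest φ) {p : ℝ × ℝ} (hp : p ∉ Omega) : φ p = 0 :=
  image_eq_zero_of_notMem_tsupport (fun h => hp (hφ.2.2 h))

theorem aux_ibp {φ ψ : ℝ × ℝ → ℝ} (hφ : IsTest φ) (hψ : IsTest ψ) (e : ℝ × ℝ) :
    ∫ p in Omega, ψ p * fderiv ℝ φ p e = - ∫ p in Omega, fderiv ℝ ψ p e * φ p := by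
  rw [setIntegral_eq_integral_of_forall_compl_eq_zero, setIntegral_eq_integral_of_forall_compl_eq_zero]
  · apply integral_mul_fderiv_eq_neg_fderiv_mul_of_integrable
    · exact ((aux_fd_cont hψ e).mul hφ.1.continuous).integrable_of_hasCompactSupport
        (hφ.2.1.mul_left)
    · exact (hψ.1.continuous.mul (aux_fd_cont hφ e)).integrable_of_hasCompactSupport
        (hψ.2.1.mul_right)
    · exact (hψ.1.continuous.mul hφ.1.continuous).integrable_of_hasCompactSupport
        (hψ.2.1.mul_right)
    · intro x _; exact hψ.1.differentiable (by simp) x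
    · intro x _; exact hφ.1.differentiable (by simp) x
  · intro x hx; rw [aux_zero_off hφ hx, mul_zero]
  · intro x hx; rw [aux_zero_off hψ hx, zero_mul]

theorem aux_young {μ : Measure (ℝ × ℝ)} {f g : ℝ × ℝ → ℝ} (hf : MemLp f 2 μ) (hg : MemLp g 2 μ)
    {t : ℝ} (ht : 0 < t) :
    |∫ p, f p * g p ∂μ| ≤ t⁻¹ * ∫ p, (f p) ^ 2 ∂μ + t * ∫ p, (g p) ^ 2 ∂μ := by
  rw [← integral_const_mul, ← integral_const_mul, ← integral_add
    (hf.integrable_sq.const_mul _) (hg.integrable_sq.const_mul _), ← Real.norm_eq_abs]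
  apply norm_integral_le_of_norm_le
    ((hf.integrable_sq.const_mul _).add (hg.integrable_sq.const_mul _))
  filter_upwards with p
  simp only [Pi.add_apply]
  rw [Real.norm_eq_abs, abs_mul, ← sq_abs (f p), ← sq_abs (g p)]
  have hA := abs_nonneg (f p)
  have hB := abs_nonneg (g p)
  set A := |f p|
  set B := |g p|
  have : t⁻¹ * A ^ 2 + t * B ^ 2 - A * B = t⁻¹ * ((A - t * B) ^ 2) + A * B := by
    field_simp; ring
  have h2 : 0 ≤ t⁻¹ * ((A - t * B) ^ 2) := by positivity
  nlinarith [mul_nonneg hA hB]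

theorem aux_weak {w v h : ℝ × ℝ → ℝ} (e : ℝ × ℝ) (hw : Continuous w)
    (hwpos : ∀ p ∈ Omega, 0 < w p) (hv : MemLp v 2 (volume.restrict Omega))
    (hh : MemLp (fun p => w p * h p) 2 (volume.restrict Omega))
    (happ : ∀ ε > 0, ∃ ψ, IsTest ψ ∧ ∫ p in Omega, (v p - ψ p) ^ 2 < ε ∧
      ∫ p in Omega, (w p * (h p - fderiv ℝ ψ p e)) ^ 2 < ε) :
    LocallyIntegrableOn v Omega volume ∧ LocallyIntegrableOn h Omega volume ∧
    ∀ φ, IsTestOn Omega φ →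
      ∫ p in Omega, v p * fderiv ℝ φ p e = - ∫ p in Omega, h p * φ p := by
  have hΩ : MeasurableSet Omega := aux_isOpen.measurableSet
  have hvi : IntegrableOn v Omega volume := hv.integrable (by norm_num)
  have hhi : IntegrableOn (fun p => w p * h p) Omega volume := hh.integrable (by norm_num)
  have hwc : ContinuousOn (fun p => (w p)⁻¹) Omega :=
    hw.continuousOn.inv₀ (fun p hp => (hwpos p hp).ne')
  refine ⟨hvi.locallyIntegrableOn, ?_, ?_⟩
  · have h1 := (hhi.locallyIntegrableOn).continuousOn_mul hwc aux_isOpen.isLocallyClosed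
    refine h1.congr ?_
    filter_upwards [ae_restrict_mem hΩ] with p hp
    have := (hwpos p hp).ne'
    field_simp
  · intro φ hφ
    have hφ' : IsTest φ := hφ
    have hq : MemLp (fun p => (w p)⁻¹ * φ p) 2 (volume.restrict Omega) := by
      refine (Continuous.memLp_of_hasCompactSupport ?_ hφ.2.1.mul_left).restrict _
      apply continuous_of_tsupport
      intro x hx
      have hxΩ : x ∈ Omega := hφ.2.2 (tsupport_mul_subset_right hx)
      exact (hw.continuousAt.inv₀ (hwpos x hxΩ).ne').mul hφ.1.continuous.continuousAt
    have hd : MemLp (fun p => fderiv ℝ φ p e) 2 (volume.restrict Omega) := by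
      simpa using aux_test_memLp' (w := fun _ => 1) hφ' continuous_const e
    set K1 := ∫ p in Omega, (fderiv ℝ φ p e) ^ 2
    set K2 := ∫ p in Omega, ((w p)⁻¹ * φ p) ^ 2
    have hK1 : 0 ≤ K1 := integral_nonneg fun p => sq_nonneg _
    have hK2 : 0 ≤ K2 := integral_nonneg fun p => sq_nonneg _
    have hhφ : Integrable (fun p => h p * φ p) (volume.restrict Omega) := by
      refine (hh.integrable_mul hq).congr ?_
      filter_upwards [ae_restrict_mem hΩ] with p hp
      have := (hwpos p hp).ne'
      simp only [Pi.mul_apply]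
      field_simp
    have key : ∀ t > 0, |(∫ p in Omega, v p * fderiv ℝ φ p e) + ∫ p in Omega, h p * φ p|
        ≤ t * (2 + K1 + K2) := by
      intro t ht
      obtain ⟨ψ, hψ, h1, h2⟩ := happ (t ^ 2) (by positivity)
      have hm1 : MemLp (fun p => v p - ψ p) 2 (volume.restrict Omega) :=
        hv.sub (aux_test_memLp hψ)
      have hm2 : MemLp (fun p => w p * (h p - fderiv ℝ ψ p e)) 2 (volume.restrict Omega) := by
        have := hh.sub (aux_test_memLp' hψ hw e)
        simpa [mul_sub, Pi.sub_def] using this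
      have y1 := aux_young hm1 hd ht
      have y2 := aux_young hm2 hq ht
      have e1 : ∫ p in Omega, (v p - ψ p) * fderiv ℝ φ p e
          = (∫ p in Omega, v p * fderiv ℝ φ p e) - ∫ p in Omega, ψ p * fderiv ℝ φ p e := by
        have := integral_sub (hv.integrable_mul hd) ((aux_test_memLp hψ).integrable_mul hd)
        simp only [Pi.mul_apply] at this
        rw [← this]
        simp only [sub_mul]
      have hψd : MemLp (fun p => fderiv ℝ ψ p e) 2 (volume.restrict Omega) := by
        simpa using aux_test_memLp' (w := fun _ => 1) hψ continuous_const e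
      have e2 : ∫ p in Omega, w p * (h p - fderiv ℝ ψ p e) * ((w p)⁻¹ * φ p)
          = (∫ p in Omega, h p * φ p) - ∫ p in Omega, fderiv ℝ ψ p e * φ p := by
        have h0 := integral_sub hhφ (hψd.integrable_mul (aux_test_memLp hφ'))
        simp only [Pi.mul_apply] at h0
        rw [← h0]
        apply setIntegral_congr_fun hΩ
        intro p hp
        have := (hwpos p hp).ne'
        simp only
        field_simp
      rw [e1] at y1
      rw [e2] at y2
      have e3 := aux_ibp hφ' hψ e
      have b1 : t⁻¹ * ∫ p in Omega, (v p - ψ p) ^ 2 ≤ t := by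
        rw [inv_mul_le_iff₀ ht]; nlinarith
      have b2 : t⁻¹ * ∫ p in Omega, (w p * (h p - fderiv ℝ ψ p e)) ^ 2 ≤ t := by
        rw [inv_mul_le_iff₀ ht]; nlinarith
      have e4 : (∫ p in Omega, v p * fderiv ℝ φ p e) + ∫ p in Omega, h p * φ p
        = ((∫ p in Omega, v p * fderiv ℝ φ p e) - ∫ p in Omega, ψ p * fderiv ℝ φ p e)
          + ((∫ p in Omega, h p * φ p) - ∫ p in Omega, fderiv ℝ ψ p e * φ p) := by
        rw [e3]; ring
      rw [e4]
      refine (abs_add_le _ _).trans ?_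
      linarith
    have hz : |(∫ p in Omega, v p * fderiv ℝ φ p e) + ∫ p in Omega, h p * φ p| ≤ 0 := by
      apply le_of_forall_pos_le_add
      intro δ hδ
      have := key (δ / (2 + K1 + K2)) (by positivity)
      rw [div_mul_cancel₀ _ (by positivity)] at this
      linarith
    have := abs_nonpos_iff.1 hz
    linarith

def auxApp (w₁ w₂ v hx hy : ℝ × ℝ → ℝ) : Prop :=
  ∀ ε : ℝ, 0 < ε → ∃ φ : ℝ × ℝ → ℝ, IsTest φ ∧
    ∫ p in Omega, (v p - φ p) ^ 2 < ε ∧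
    ∫ p in Omega, (w₁ p * (hx p - fderiv ℝ φ p (1, 0))) ^ 2 < ε ∧
    ∫ p in Omega, (w₂ p * (hy p - fderiv ℝ φ p (0, 1))) ^ 2 < ε

theorem aux_of_H10 {α₁ α₂ : ℝ} {u gx gy : ℝ × ℝ → ℝ} (h : MemH10 α₁ α₂ u gx gy) :
    auxApp (fun p => p.2 ^ α₁) (fun p => p.1 ^ α₂) u gx gy := by
  intro ε hε
  obtain ⟨φ, hφ, hn⟩ := h.2 (Real.sqrt ε) (Real.sqrt_pos.2 hε)
  refine ⟨φ, hφ, ?_⟩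
  unfold H1Norm pdx pdy at hn
  have hn' := (Real.sqrt_lt_sqrt_iff (by positivity)).1 hn
  have h1 : 0 ≤ ∫ p in Omega, (u p - φ p) ^ 2 := integral_nonneg fun p => sq_nonneg _
  have h2 : 0 ≤ ∫ p in Omega, (p.2 ^ α₁ * (gx p - fderiv ℝ φ p (1, 0))) ^ 2 :=
    integral_nonneg fun p => sq_nonneg _
  have h3 : 0 ≤ ∫ p in Omega, (p.1 ^ α₂ * (gy p - fderiv ℝ φ p (0, 1))) ^ 2 :=
    integral_nonneg fun p => sq_nonneg _
  refine ⟨?_, ?_, ?_⟩ <;> linarith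

theorem aux_w1 {α : ℝ} (h : 0 < α) : Continuous (fun p : ℝ × ℝ => p.2 ^ α) :=
  continuous_snd.rpow_const fun _ => Or.inr h.le

theorem aux_w2 {α : ℝ} (h : 0 < α) : Continuous (fun p : ℝ × ℝ => p.1 ^ α) :=
  continuous_fst.rpow_const fun _ => Or.inr h.le

theorem aux_to_H10 {α₁ α₂ : ℝ} (h1 : 0 < α₁) (h2 : 0 < α₂) {u gx gy : ℝ × ℝ → ℝ}
    (m0 : MemLp u 2 (volume.restrict Omega))
    (m1 : MemLp (fun p => p.2 ^ α₁ * gx p) 2 (volume.restrict Omega))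
    (m2 : MemLp (fun p => p.1 ^ α₂ * gy p) 2 (volume.restrict Omega))
    (h : auxApp (fun p => p.2 ^ α₁) (fun p => p.1 ^ α₂) u gx gy) :
    MemH10 α₁ α₂ u gx gy := by
  refine ⟨⟨m0, ?_, ?_, m1, m2⟩, ?_⟩
  · refine aux_weak (1, 0) (aux_w1 h1) (fun p hp => Real.rpow_pos_of_pos hp.2.1 _) m0 m1 ?_
    intro ε hε
    obtain ⟨φ, hφ, a, b, c⟩ := h ε hε
    exact ⟨φ, hφ, a, b⟩
  · refine aux_weak (0, 1) (aux_w2 h2) (fun p hp => Real.rpow_pos_of_pos hp.1.1 _) m0 m2 ?_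
    intro ε hε
    obtain ⟨φ, hφ, a, b, c⟩ := h ε hε
    exact ⟨φ, hφ, a, c⟩
  · intro ε hε
    obtain ⟨φ, hφ, a, b, c⟩ := h (ε ^ 2 / 3) (by positivity)
    refine ⟨φ, hφ, ?_⟩
    unfold H1Norm pdx pdy
    rw [Real.sqrt_lt' hε]
    linarith

theorem aux_closed {w₁ w₂ v hx hy : ℝ × ℝ → ℝ} (c1 : Continuous w₁) (c2 : Continuous w₂)
    (m0 : MemLp v 2 (volume.restrict Omega))
    (m1 : MemLp (fun p => w₁ p * hx p) 2 (volume.restrict Omega))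
    (m2 : MemLp (fun p => w₂ p * hy p) 2 (volume.restrict Omega))
    (h : ∀ ε : ℝ, 0 < ε → ∃ v' hx' hy' : ℝ × ℝ → ℝ,
      MemLp v' 2 (volume.restrict Omega) ∧
      MemLp (fun p => w₁ p * hx' p) 2 (volume.restrict Omega) ∧
      MemLp (fun p => w₂ p * hy' p) 2 (volume.restrict Omega) ∧
      auxApp w₁ w₂ v' hx' hy' ∧
      ∫ p in Omega, (v p - v' p) ^ 2 < ε ∧
      ∫ p in Omega, (w₁ p * (hx p - hx' p)) ^ 2 < ε ∧
      ∫ p in Omega, (w₂ p * (hy p - hy' p)) ^ 2 < ε) : auxApp w₁ w₂ v hx hy := by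
  intro ε hε
  obtain ⟨v', hx', hy', n0, n1, n2, ha, b0, b1, b2⟩ := h (ε / 4) (by positivity)
  obtain ⟨φ, hφ, d0, d1, d2⟩ := ha (ε / 4) (by positivity)
  have gen : ∀ (w a b d : ℝ × ℝ → ℝ), MemLp (fun p => w p * a p) 2 (volume.restrict Omega) →
      MemLp (fun p => w p * b p) 2 (volume.restrict Omega) →
      MemLp (fun p => w p * d p) 2 (volume.restrict Omega) →
      ∫ p in Omega, (w p * (a p - b p)) ^ 2 < ε / 4 →
      ∫ p in Omega, (w p * (b p - d p)) ^ 2 < ε / 4 →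
      ∫ p in Omega, (w p * (a p - d p)) ^ 2 < ε := by
    intro w a b d ma mb md h1 h2
    have h3 := aux_sq_add (ma.sub mb) (mb.sub md)
    have e1 : (fun p => (((fun p => w p * a p) - fun p => w p * b p) p +
      ((fun p => w p * b p) - fun p => w p * d p) p) ^ 2) = fun p => (w p * (a p - d p)) ^ 2 := by
      funext p; simp only [Pi.sub_apply]; ring
    have e2 : (fun p => (((fun p => w p * a p) - fun p => w p * b p) p) ^ 2)
       = fun p => (w p * (a p - b p)) ^ 2 := by
      funext p; simp only [Pi.sub_apply]; ring
    have e3 : (fun p => (((fun p => w p * b p) - fun p => w p * d p) p) ^ 2)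
       = fun p => (w p * (b p - d p)) ^ 2 := by
      funext p; simp only [Pi.sub_apply]; ring
    rw [e1, e2, e3] at h3
    linarith
  refine ⟨φ, hφ, ?_, ?_, ?_⟩
  · have := gen (fun _ => 1) v v' φ (by simpa using m0) (by simpa using n0)
      (by simpa using aux_test_memLp hφ) (by simpa using b0) (by simpa using d0)
    simpa using this
  · exact gen w₁ hx hx' _ m1 n1 (aux_test_memLp' hφ c1 _) b1 d1
  · exact gen w₂ hy hy' _ m2 n2 (aux_test_memLp' hφ c2 _) b2 d2

theorem aux_comp_dir {F : ℝ → ℝ} (hF : ContDiff ℝ (⊤ : ℕ∞) F) {C : ℝ}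
    (hC : ∀ t, |deriv F t| ≤ C) {w u h : ℝ × ℝ → ℝ} (e : ℝ × ℝ) (hw : Continuous w)
    (m0 : AEStronglyMeasurable u (volume.restrict Omega))
    (m1 : MemLp (fun p => w p * h p) 2 (volume.restrict Omega))
    {φ : ℕ → ℝ × ℝ → ℝ} (hφ : ∀ n, IsTest (φ n))
    (hae : ∀ᵐ p ∂(volume.restrict Omega), Tendsto (fun n => φ n p) atTop (nhds (u p)))
    (hlim : Tendsto (fun n => ∫ p in Omega, (w p * (h p - fderiv ℝ (φ n) p e)) ^ 2)
      atTop (nhds 0)) :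
    Tendsto (fun n => ∫ p in Omega, (w p * (deriv F (u p) * h p
      - fderiv ℝ (fun q => F (φ n q)) p e)) ^ 2) atTop (nhds 0) := by
  have hF' : Continuous (deriv F) := hF.continuous_deriv (by simp)
  have hC0 : 0 ≤ C := (abs_nonneg _).trans (hC 0)
  have hd : ∀ n p, fderiv ℝ (fun q => F (φ n q)) p e = deriv F (φ n p) * fderiv ℝ (φ n) p e := by
    intro n p
    have h1 : HasDerivAt F (deriv F (φ n p)) (φ n p) :=
      (hF.differentiable (by simp) _).hasDerivAt
    have h2 := ((hφ n).1.differentiable (by simp) p).hasFDerivAt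
    have := (h1.comp_hasFDerivAt p h2).fderiv
    have h3 : (fun q => F (φ n q)) = F ∘ φ n := rfl
    rw [h3, this]
    simp
  have k1 : Tendsto (fun n => ∫ p in Omega, ((deriv F (u p) - deriv F (φ n p)) * (w p * h p)) ^ 2)
      atTop (nhds 0) := by
    apply aux_dct (C + C) _ _ m1
    · filter_upwards [hae] with p hp
      have := ((hF'.tendsto (u p)).comp hp).const_sub (deriv F (u p))
      simpa using this
    · intro n
      exact (hF'.comp_aestronglyMeasurable m0).sub
        (hF'.comp (hφ n).1.continuous).aestronglyMeasurable
    · intro n p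
      exact (abs_sub _ _).trans (add_le_add (hC _) (hC _))
  have k2 := (k1.const_mul 2).add ((hlim.const_mul (C ^ 2)).const_mul 2)
  simp only [mul_zero, add_zero] at k2
  refine squeeze_zero (fun n => integral_nonneg fun p => sq_nonneg _) (fun n => ?_) k2
  have md : MemLp (fun p => w p * (h p - fderiv ℝ (φ n) p e)) 2 (volume.restrict Omega) := by
    have := m1.sub (aux_test_memLp' (hφ n) hw e)
    simpa [mul_sub, Pi.sub_def] using this
  have ma : MemLp (fun p => (deriv F (u p) - deriv F (φ n p)) * (w p * h p)) 2
      (volume.restrict Omega) :=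
    aux_bdd_mul (C + C) ((hF'.comp_aestronglyMeasurable m0).sub
        (hF'.comp (hφ n).1.continuous).aestronglyMeasurable)
        (fun p => (abs_sub _ _).trans (add_le_add (hC _) (hC _))) m1
  have mb : MemLp (fun p => deriv F (φ n p) * (w p * (h p - fderiv ℝ (φ n) p e))) 2
      (volume.restrict Omega) :=
    aux_bdd_mul C ((hF'.comp (hφ n).1.continuous).aestronglyMeasurable) (fun p => hC _) md
  have h3 := aux_sq_add ma mb
  have h4 : ∫ p in Omega, (deriv F (φ n p) * (w p * (h p - fderiv ℝ (φ n) p e))) ^ 2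
      ≤ C ^ 2 * ∫ p in Omega, (w p * (h p - fderiv ℝ (φ n) p e)) ^ 2 := by
    rw [← integral_const_mul]
    apply integral_mono mb.integrable_sq (md.integrable_sq.const_mul _)
    intro p
    simp only
    rw [mul_pow]
    exact mul_le_mul_of_nonneg_right
      (sq_le_sq' (abs_le.1 (hC _)).1 (abs_le.1 (hC _)).2) (sq_nonneg _)
  have h5 : ∫ p in Omega, (w p * (deriv F (u p) * h p
      - fderiv ℝ (fun q => F (φ n q)) p e)) ^ 2 = ∫ p in Omega,
      ((deriv F (u p) - deriv F (φ n p)) * (w p * h p) +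
        deriv F (φ n p) * (w p * (h p - fderiv ℝ (φ n) p e))) ^ 2 := by
    congr 1
    funext p
    rw [hd]
    ring
  rw [h5]
  linarith

theorem aux_lip {F : ℝ → ℝ} (hF : ContDiff ℝ (⊤ : ℕ∞) F) {C : ℝ}
    (hC : ∀ t, |deriv F t| ≤ C) (a b : ℝ) : |F a - F b| ≤ C * |a - b| :=
  convex_univ.norm_image_sub_le_of_norm_deriv_le (f := F) (s := univ)
    (fun x _ => hF.differentiable (by simp) x) (fun x _ => hC x) (mem_univ b) (mem_univ a)

theorem aux_comp {F : ℝ → ℝ} (hF : ContDiff ℝ (⊤ : ℕ∞) F) (hF0 : F 0 = 0) {C : ℝ}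
    (hC : ∀ t, |deriv F t| ≤ C) {w₁ w₂ u gx gy : ℝ × ℝ → ℝ}
    (c1 : Continuous w₁) (c2 : Continuous w₂)
    (m0 : MemLp u 2 (volume.restrict Omega))
    (m1 : MemLp (fun p => w₁ p * gx p) 2 (volume.restrict Omega))
    (m2 : MemLp (fun p => w₂ p * gy p) 2 (volume.restrict Omega))
    (h : auxApp w₁ w₂ u gx gy) :
    auxApp w₁ w₂ (fun p => F (u p)) (fun p => deriv F (u p) * gx p)
      (fun p => deriv F (u p) * gy p) := by
  have hC0 : 0 ≤ C := (abs_nonneg _).trans (hC 0)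
  choose φ hφ a0 a1 a2 using fun n : ℕ => h (1 / ((n : ℝ) + 1)) (by positivity)
  have lim := tendsto_one_div_add_atTop_nhds_zero_nat (𝕜 := ℝ)
  have t0 := squeeze_zero (fun n => integral_nonneg fun p => sq_nonneg _) (fun n => (a0 n).le) lim
  have t1 := squeeze_zero (fun n => integral_nonneg fun p => sq_nonneg _) (fun n => (a1 n).le) lim
  have t2 := squeeze_zero (fun n => integral_nonneg fun p => sq_nonneg _) (fun n => (a2 n).le) lim
  have md : ∀ n, MemLp (fun p => u p - φ n p) 2 (volume.restrict Omega) :=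
    fun n => m0.sub (aux_test_memLp (hφ n))
  obtain ⟨ns, hns, hae⟩ := aux_subseq md t0
  have hae' : ∀ᵐ p ∂(volume.restrict Omega),
      Tendsto (fun n => φ (ns n) p) atTop (nhds (u p)) := by
    filter_upwards [hae] with p hp
    have := hp.const_sub (u p)
    simpa using this
  have s1 := aux_comp_dir hF hC (1, 0) c1 m0.1 m1 (fun n => hφ (ns n)) hae'
    (t1.comp hns.tendsto_atTop)
  have s2 := aux_comp_dir hF hC (0, 1) c2 m0.1 m2 (fun n => hφ (ns n)) hae'
    (t2.comp hns.tendsto_atTop)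
  have s0 : Tendsto (fun n => ∫ p in Omega, (F (u p) - F (φ (ns n) p)) ^ 2) atTop (nhds 0) := by
    have k := (t0.comp hns.tendsto_atTop).const_mul (C ^ 2)
    rw [mul_zero] at k
    refine squeeze_zero (fun n => integral_nonneg fun p => sq_nonneg _) (fun n => ?_) k
    simp only [Function.comp]
    rw [← integral_const_mul]
    apply integral_mono_of_nonneg
    · filter_upwards with p using sq_nonneg _
    · exact (md (ns n)).integrable_sq.const_mul _
    · filter_upwards with p
      rw [← sq_abs, ← sq_abs (u p - φ (ns n) p), ← mul_pow]
      gcongr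
      exact aux_lip hF hC _ _
  intro ε hε
  obtain ⟨n, e0, e1, e2⟩ := ((s0.eventually_lt_const hε).and
    ((s1.eventually_lt_const hε).and (s2.eventually_lt_const hε))).exists
  refine ⟨fun q => F (φ (ns n) q), ⟨hF.comp (hφ _).1, ?_, ?_⟩, e0, e1, e2⟩
  · exact (hφ (ns n)).2.1.comp_left hF0
  · refine subset_trans ?_ (hφ (ns n)).2.2
    exact closure_mono (fun x hx hx' => hx (by simp [hx', hF0]))

def auxF (a b c : ℝ) (n : ℕ) (t : ℝ) : ℝ :=
  a * t + b * (Real.sqrt (t ^ 2 + (1 / ((n : ℝ) + 1)) ^ 2) - 1 / ((n : ℝ) + 1))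
    + c * (1 / ((n : ℝ) + 1) * Real.arctan (t * ((n : ℝ) + 1)))

def auxG (a b c : ℝ) (n : ℕ) (t : ℝ) : ℝ :=
  a + b * (t / Real.sqrt (t ^ 2 + (1 / ((n : ℝ) + 1)) ^ 2))
    + c * (1 / (1 + (t * ((n : ℝ) + 1)) ^ 2))

def auxD (a b c : ℝ) (t : ℝ) : ℝ :=
  a + b * (if 0 < t then 1 else if t < 0 then -1 else 0) + c * (if t = 0 then 1 else 0)

theorem auxF_smooth (a b c : ℝ) (n : ℕ) : ContDiff ℝ (⊤ : ℕ∞) (auxF a b c n) := by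
  unfold auxF
  have h : ∀ t : ℝ, t ^ 2 + (1 / ((n : ℝ) + 1)) ^ 2 ≠ 0 := fun t => by positivity
  have h1 : ContDiff ℝ (⊤ : ℕ∞) (fun t : ℝ => Real.sqrt (t ^ 2 + (1 / ((n : ℝ) + 1)) ^ 2)) :=
    ContDiff.sqrt (by fun_prop) h
  have h2 : ContDiff ℝ (⊤ : ℕ∞) (fun t : ℝ => Real.arctan (t * ((n : ℝ) + 1))) :=
    Real.contDiff_arctan.comp (by fun_prop)
  fun_prop

theorem auxF_deriv (a b c : ℝ) (n : ℕ) (t : ℝ) :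
    deriv (auxF a b c n) t = auxG a b c n t := by
  have h : t ^ 2 + (1 / ((n : ℝ) + 1)) ^ 2 ≠ 0 := by positivity
  have hn : (n : ℝ) + 1 ≠ 0 := by positivity
  have h1 := (((hasDerivAt_id t).pow 2).add_const ((1 / ((n : ℝ) + 1)) ^ 2)).sqrt h
  have h2 := ((hasDerivAt_id t).mul_const ((n : ℝ) + 1)).arctan
  have h3 := (((hasDerivAt_id t).const_mul a).add ((h1.sub_const (1 / ((n : ℝ) + 1))).const_mul b)).add
    ((h2.const_mul (1 / ((n : ℝ) + 1))).const_mul c)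
  have h4 : HasDerivAt (auxF a b c n) _ t := h3
  rw [h4.deriv]
  unfold auxG
  have hs : Real.sqrt (t ^ 2 + (1 / ((n : ℝ) + 1)) ^ 2) ≠ 0 := by positivity
  have hp : 1 + (t * ((n : ℝ) + 1)) ^ 2 ≠ 0 := by positivity
  simp only [id, Nat.cast_ofNat]
  congr 1
  · congr 1
    · ring
    · congr 1
      simp only [Pi.pow_apply, id]
      field_simp
      try ring
  · congr 1
    field_simp

theorem auxG_bound (a b c : ℝ) (n : ℕ) (t : ℝ) : |auxG a b c n t| ≤ |a| + |b| + |c| := by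
  unfold auxG
  have hpos : 0 < Real.sqrt (t ^ 2 + (1 / ((n : ℝ) + 1)) ^ 2) := by positivity
  have h1 : |t / Real.sqrt (t ^ 2 + (1 / ((n : ℝ) + 1)) ^ 2)| ≤ 1 := by
    rw [abs_div, abs_of_pos hpos, div_le_one hpos]
    apply Real.abs_le_sqrt
    have : 0 ≤ (1 / ((n : ℝ) + 1)) ^ 2 := by positivity
    linarith
  have h2 : |1 / (1 + (t * ((n : ℝ) + 1)) ^ 2)| ≤ 1 := by
    rw [abs_of_pos (by positivity), div_le_one (by positivity)]
    have : 0 ≤ (t * ((n : ℝ) + 1)) ^ 2 := by positivity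
    linarith
  refine (abs_add_le _ _).trans (add_le_add ((abs_add_le _ _).trans (add_le_add le_rfl ?_)) ?_)
  · rw [abs_mul]; exact mul_le_of_le_one_right (abs_nonneg _) h1
  · rw [abs_mul]; exact mul_le_of_le_one_right (abs_nonneg _) h2

theorem auxD_bound (a b c : ℝ) (t : ℝ) : |auxD a b c t| ≤ |a| + |b| + |c| := by
  unfold auxD
  refine (abs_add_le _ _).trans (add_le_add ((abs_add_le _ _).trans (add_le_add le_rfl ?_)) ?_)
  · rw [abs_mul]; apply mul_le_of_le_one_right (abs_nonneg _)
    split_ifs <;> simp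
  · rw [abs_mul]; apply mul_le_of_le_one_right (abs_nonneg _)
    split_ifs <;> simp

theorem auxD_meas (a b c : ℝ) : Measurable (auxD a b c) := by
  unfold auxD
  refine (measurable_const.add (Measurable.const_mul ?_ b)).add (Measurable.const_mul ?_ c)
  · exact Measurable.ite measurableSet_Ioi measurable_const
      (Measurable.ite measurableSet_Iio measurable_const measurable_const)
  · exact Measurable.ite (measurableSet_singleton 0) measurable_const measurable_const

theorem auxG_lim (a b c t : ℝ) :
    Tendsto (fun n => auxG a b c n t) atTop (nhds (auxD a b c t)) := by
  unfold auxG auxD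
  have lim := tendsto_one_div_add_atTop_nhds_zero_nat (𝕜 := ℝ)
  have l1 : Tendsto (fun n : ℕ => Real.sqrt (t ^ 2 + (1 / ((n : ℝ) + 1)) ^ 2)) atTop
      (nhds |t|) := by
    have := (Real.continuous_sqrt.tendsto _).comp ((lim.pow 2).const_add (t ^ 2))
    simpa [Real.sqrt_sq_eq_abs, Function.comp_def] using this
  refine (tendsto_const_nhds.add (Tendsto.const_mul b ?_)).add (Tendsto.const_mul c ?_)
  · by_cases ht : t = 0
    · simp [ht]
    · have := (tendsto_const_nhds (x := t)).div l1 (abs_ne_zero.2 ht)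
      suffices e : (if 0 < t then (1:ℝ) else if t < 0 then -1 else 0) = t / |t| by
        rw [e]; exact this
      rcases lt_or_gt_of_ne ht with h | h
      · simp [h, h.not_gt, abs_of_neg h, div_neg, div_self ht]
      · simp [h, abs_of_pos h, div_self ht]
  · by_cases ht : t = 0
    · simp [ht]
    · simp only [ht, if_false]
      have l2 : Tendsto (fun n : ℕ => (t ^ 2) * ((n : ℝ) + 1)) atTop atTop :=
        (tendsto_atTop_add_const_right _ 1 tendsto_natCast_atTop_atTop).const_mul_atTop
          (by positivity)
      have l3 := l2.inv_tendsto_atTop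
      refine squeeze_zero (fun n => by positivity) (fun n => ?_) l3
      rw [Pi.inv_apply, one_div]
      have : 0 < t ^ 2 := by positivity
      gcongr
      have hn : (0:ℝ) ≤ n := Nat.cast_nonneg n
      rw [mul_pow]
      nlinarith [mul_nonneg this.le hn, mul_nonneg (mul_nonneg this.le hn) hn]

theorem auxF_close (a b c t : ℝ) (n : ℕ) :
    |a * t + b * |t| - auxF a b c n t| ≤ (|b| + 2 * |c|) * (1 / ((n : ℝ) + 1)) := by
  unfold auxF
  set ε := 1 / ((n : ℝ) + 1) with hε
  have hpos : 0 < ε := by positivity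
  have h1 : |(|t| - (Real.sqrt (t ^ 2 + ε ^ 2) - ε))| ≤ ε := by
    have k1 : Real.sqrt (t ^ 2 + ε ^ 2) ≤ |t| + ε := by
      apply Real.sqrt_le_iff.2 ⟨by positivity, ?_⟩
      nlinarith [sq_abs t, mul_nonneg (abs_nonneg t) hpos.le]
    have k2 : |t| ≤ Real.sqrt (t ^ 2 + ε ^ 2) := Real.abs_le_sqrt (by nlinarith)
    rw [abs_le]; constructor <;> linarith
  have h2 : |ε * Real.arctan (t * ((n : ℝ) + 1))| ≤ 2 * ε := by
    rw [abs_mul, abs_of_pos hpos, mul_comm]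
    have hpi := Real.pi_lt_four
    have k3 := Real.arctan_lt_pi_div_two (t * ((n : ℝ) + 1))
    have k4 := Real.neg_pi_div_two_lt_arctan (t * ((n : ℝ) + 1))
    have : |Real.arctan (t * ((n : ℝ) + 1))| ≤ 2 := by rw [abs_le]; constructor <;> linarith
    gcongr
  have e : a * t + b * |t| - (a * t + b * (Real.sqrt (t ^ 2 + ε ^ 2) - ε)
      + c * (ε * Real.arctan (t * ((n : ℝ) + 1)))) =
      b * (|t| - (Real.sqrt (t ^ 2 + ε ^ 2) - ε)) - c * (ε * Real.arctan (t * ((n : ℝ) + 1))) := by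
    ring
  rw [e]
  refine (abs_sub _ _).trans ?_
  rw [abs_mul, abs_mul]
  have := mul_le_mul_of_nonneg_left h1 (abs_nonneg b)
  have := mul_le_mul_of_nonneg_left h2 (abs_nonneg c)
  linarith

theorem aux_main {α₁ α₂ : ℝ} (h1 : 0 < α₁) (h2 : 0 < α₂) {u gx gy : ℝ × ℝ → ℝ}
    (hu : MemH10 α₁ α₂ u gx gy) (a b c : ℝ) :
    MemH10 α₁ α₂ (fun p => a * u p + b * |u p|) (fun p => auxD a b c (u p) * gx p)
      (fun p => auxD a b c (u p) * gy p) := by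
  have m0 := hu.1.memL2
  have m1 := hu.1.wgx
  have m2 := hu.1.wgy
  have lim := tendsto_one_div_add_atTop_nhds_zero_nat (𝕜 := ℝ)
  have hDm : AEStronglyMeasurable (fun p => auxD a b c (u p)) (volume.restrict Omega) :=
    ((auxD_meas a b c).comp_aemeasurable m0.1.aemeasurable).aestronglyMeasurable
  have hGm : ∀ n, AEStronglyMeasurable (fun p => deriv (auxF a b c n) (u p))
      (volume.restrict Omega) := fun n =>
    ((auxF_smooth a b c n).continuous_deriv (by simp)).comp_aestronglyMeasurable m0.1
  have hC : ∀ n t, |deriv (auxF a b c n) t| ≤ |a| + |b| + |c| := fun n t => by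
    rw [auxF_deriv]; exact auxG_bound a b c n t
  have hF0 : ∀ n, auxF a b c n 0 = 0 := fun n => by
    have : (0:ℝ) ≤ 1 / ((n : ℝ) + 1) := by positivity
    unfold auxF
    rw [zero_pow two_ne_zero, zero_add, Real.sqrt_sq this]
    simp
  have M0 : MemLp (fun p => a * u p + b * |u p|) 2 (volume.restrict Omega) :=
    (m0.const_mul a).add (m0.abs.const_mul b)
  have mulW : ∀ (w g m : ℝ × ℝ → ℝ), MemLp (fun p => w p * g p) 2 (volume.restrict Omega) →
      AEStronglyMeasurable m (volume.restrict Omega) → (∀ p, |m p| ≤ |a| + |b| + |c|) →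
      MemLp (fun p => w p * (m p * g p)) 2 (volume.restrict Omega) := by
    intro w g m k1 k2 k3
    have := aux_bdd_mul _ k2 k3 k1
    have e : (fun p => w p * (m p * g p)) = fun p => m p * (w p * g p) := by
      funext p; ring
    rwa [e]
  have M1 := mulW _ _ _ m1 hDm (fun p => auxD_bound a b c _)
  have M2 := mulW _ _ _ m2 hDm (fun p => auxD_bound a b c _)
  refine aux_to_H10 h1 h2 M0 M1 M2 ?_
  refine aux_closed (aux_w1 h1) (aux_w2 h2) M0 M1 M2 ?_
  have limW : ∀ (w g : ℝ × ℝ → ℝ), MemLp (fun p => w p * g p) 2 (volume.restrict Omega) →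
      Tendsto (fun n => ∫ p in Omega, (w p * (auxD a b c (u p) * g p
        - deriv (auxF a b c n) (u p) * g p)) ^ 2) atTop (nhds 0) := by
    intro w g k
    have := aux_dct (m := fun n p => auxD a b c (u p) - deriv (auxF a b c n) (u p))
      ((|a| + |b| + |c|) + (|a| + |b| + |c|)) (fun n => hDm.sub (hGm n))
      (fun n p => (abs_sub _ _).trans (add_le_add (auxD_bound a b c _) (hC n _))) k ?_
    · refine this.congr (fun n => ?_)
      congr 1
      funext p
      ring
    · filter_upwards with p
      simp_rw [auxF_deriv]
      have := (auxG_lim a b c (u p)).const_sub (auxD a b c (u p))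
      simpa using this
  have s1 := limW _ _ m1
  have s2 := limW _ _ m2
  have hFm : ∀ n, MemLp (fun p => auxF a b c n (u p)) 2 (volume.restrict Omega) := by
    intro n
    refine MemLp.of_le_mul (c := |a| + |b| + |c|) m0
      ((auxF_smooth a b c n).continuous.comp_aestronglyMeasurable m0.1) ?_
    filter_upwards with p
    have := aux_lip (auxF_smooth a b c n) (hC n) (u p) 0
    simpa [hF0] using this
  have s0 : Tendsto (fun n => ∫ p in Omega, (a * u p + b * |u p| - auxF a b c n (u p)) ^ 2)
      atTop (nhds 0) := by
    have := aux_dct (μ := volume.restrict Omega)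
      (m := fun n p => a * u p + b * |u p| - auxF a b c n (u p)) (f := fun _ => 1)
      (|b| + 2 * |c|) (fun n => M0.1.sub (hFm n).1) ?_ (memLp_const 1) ?_
    · simpa using this
    · intro n p
      refine (auxF_close a b c (u p) n).trans ?_
      apply mul_le_of_le_one_right (by positivity)
      rw [div_le_one (by positivity)]
      have : (0:ℝ) ≤ n := Nat.cast_nonneg n
      linarith
    · filter_upwards with p
      have k := lim.const_mul (|b| + 2 * |c|)
      rw [mul_zero] at k
      exact squeeze_zero_norm (fun n => auxF_close a b c (u p) n) k
  intro ε hε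
  obtain ⟨n, e0, e1, e2⟩ := ((s0.eventually_lt_const hε).and
    ((s1.eventually_lt_const hε).and (s2.eventually_lt_const hε))).exists
  exact ⟨_, _, _, hFm n, mulW _ _ _ m1 (hGm n) (fun p => hC n _),
    mulW _ _ _ m2 (hGm n) (fun p => hC n _),
    aux_comp (auxF_smooth a b c n) (hF0 n) (hC n) (aux_w1 h1) (aux_w2 h2) m0 m1 m2 (aux_of_H10 hu),
    e0, e1, e2⟩

theorem aux_zero {h : ℝ × ℝ → ℝ} (hl : LocallyIntegrableOn h Omega volume)
    (hz : ∀ φ : ℝ × ℝ → ℝ, IsTestOn Omega φ → ∫ p in Omega, h p * φ p = 0) :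
    ∀ᵐ p ∂(volume : Measure (ℝ × ℝ)), p ∈ Omega → h p = 0 := by
  apply aux_isOpen.ae_eq_zero_of_integral_contDiff_smul_eq_zero hl
  intro g g1 g2 g3
  have hg : IsTest g := ⟨g1, g2, g3⟩
  rw [← hz g hg, setIntegral_eq_integral_of_forall_compl_eq_zero]
  · congr 1; funext p; simp [mul_comm]
  · intro p hp; rw [aux_zero_off hg hp, mul_zero]

/-- For `u ∈ 𝓗₀¹(Ω)`: the positive part `u⁺`, negative part `u⁻`
and `|u|` belong to `𝓗₀¹(Ω)`, with weak derivatives given by the indicated indicator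
formulas (which encode `∂(u⁺) = ∂u` on `{u > 0}` and `0` on `{u ≤ 0}`, etc.), and the
weak gradient of `u` vanishes a.e. on `{u = 0}`. -/
theorem pos_neg_abs_parts (α₁ α₂ : ℝ)
    (hα₁ : α₁ ∈ Ioo (0:ℝ) (1/2)) (hα₂ : α₂ ∈ Ioo (0:ℝ) (1/2))
    (u gx gy : ℝ × ℝ → ℝ) (hu : MemH10 α₁ α₂ u gx gy) :
    MemH10 α₁ α₂ (fun p => max (u p) 0)
      (fun p => if 0 < u p then gx p else 0)
      (fun p => if 0 < u p then gy p else 0) ∧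
    MemH10 α₁ α₂ (fun p => -min (u p) 0)
      (fun p => if u p < 0 then -gx p else 0)
      (fun p => if u p < 0 then -gy p else 0) ∧
    MemH10 α₁ α₂ (fun p => |u p|)
      (fun p => if 0 < u p then gx p else if u p < 0 then -gx p else 0)
      (fun p => if 0 < u p then gy p else if u p < 0 then -gy p else 0) ∧
    (∀ᵐ p ∂(volume.restrict (Omega ∩ {p : ℝ × ℝ | u p = 0})), gx p = 0 ∧ gy p = 0) := by
  have h1 := hα₁.1
  have h2 := hα₂.1
  refine ⟨?_, ?_, ?_, ?_⟩
  · convert aux_main h1 h2 hu (1/2) (1/2) (-1/2) using 1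
    · funext p
      rcases le_total (u p) 0 with h | h
      · rw [max_eq_right h, abs_of_nonpos h]; ring
      · rw [max_eq_left h, abs_of_nonneg h]; ring
    all_goals
      funext p
      unfold auxD
      rcases lt_trichotomy (u p) 0 with h | h | h
      · simp [h, h.not_gt, h.ne]
      · simp [h]; try norm_num
      · simp [h, h.ne']; try norm_num
  · convert aux_main h1 h2 hu (-1/2) (1/2) (1/2) using 1
    · funext p
      rcases le_total (u p) 0 with h | h
      · rw [min_eq_left h, abs_of_nonpos h]; ring
      · rw [min_eq_right h, abs_of_nonneg h]; ring
    all_goals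
      funext p
      unfold auxD
      rcases lt_trichotomy (u p) 0 with h | h | h
      · simp [h, h.not_gt, h.ne]; try norm_num
      · simp [h]; try norm_num
      · simp [h, h.ne', h.not_gt]; try norm_num
  · convert aux_main h1 h2 hu 0 1 0 using 1
    · funext p; ring
    all_goals
      funext p
      unfold auxD
      rcases lt_trichotomy (u p) 0 with h | h | h
      · simp [h, h.not_gt]
      · simp [h]
      · simp [h]
  · have k := (aux_main h1 h2 hu 0 0 1).1
    have kx := aux_zero k.weakX.2.1 (fun φ hφ => by
      have := k.weakX.2.2 φ hφ
      simp only [zero_mul, add_zero, integral_zero] at this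
      linarith)
    have ky := aux_zero k.weakY.2.1 (fun φ hφ => by
      have := k.weakY.2.2 φ hφ
      simp only [zero_mul, add_zero, integral_zero] at this
      linarith)
    have hm : NullMeasurableSet (Omega ∩ {p : ℝ × ℝ | u p = 0}) volume := by
      have hΩ : MeasurableSet Omega := aux_isOpen.measurableSet
      have : NullMeasurableSet {p : ℝ × ℝ | u p = 0} (volume.restrict Omega) :=
        hu.1.memL2.1.aemeasurable.nullMeasurable (measurableSet_singleton 0)
      rw [inter_comm]
      exact (nullMeasurableSet_restrict hΩ.nullMeasurableSet).1 this
    rw [ae_restrict_iff'₀ hm]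
    filter_upwards [kx, ky] with p px py hp
    have hp0 : u p = 0 := hp.2
    have qx := px hp.1
    have qy := py hp.1
    simp [auxD, hp0] at qx qy
    exact ⟨qx, qy⟩
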